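/- arXiv:1810.09344 — 2 statements merged into one kernel-verified Lean document; each statement's English description precedes it below -/
import Mathlib

section
/- Let V be a real Hilbert space, r > α where α := ln 3/(2·ln 2), and let v : Y → V belong to the class A^r with ‖v‖_{A^r} ≤ M0 and sup_{y∈Y} ‖v(y)‖ = M > 0, where Y = [−1,1]^d. Let m ≥ 1 be an integer such that 4·M0·m^{−r+α} < M, and let N ≥ 1. Then the set of N-tuples (y_1,…,y_N) ∈ Y^N with max_{1≤i≤N} ‖v(y_i)‖ ≥ M/(8·m^α) has ρ_C^{⊗N}-measure at least 1 − (1 − 3/(4·m^{2α}))^N, where ρ_C is the tensor product Chebychev probability measure on Y given by dρ_C(y) = ∏_{j=1}^d dy_j/(π·√(1−y_j²)). -/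
open MeasureTheory

/-- The parameter cube `Y = [-1,1]^d`. -/
def cube (d : ℕ) : Set (Fin d → ℝ) := Set.univ.pi fun _ => Set.Icc (-1 : ℝ) 1

/-- A finite set `Λ ⊂ ℕ^d` is downward closed if `ν ∈ Λ` and `μ ≤ ν` (componentwise)
imply `μ ∈ Λ`. -/
def DownwardClosed {d : ℕ} (Λ : Finset (Fin d → ℕ)) : Prop :=
  ∀ ν ∈ Λ, ∀ μ : Fin d → ℕ, μ ≤ ν → μ ∈ Λ

/-- The `V`-valued polynomial `y ↦ ∑_{ν ∈ Λ} y^ν • a_ν`, with `y^ν = ∏_j y_j^{ν_j}`. -/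
noncomputable def polyEval {d : ℕ} {V : Type*} [AddCommGroup V] [Module ℝ V]
    (Λ : Finset (Fin d → ℕ)) (a : (Fin d → ℕ) → V) (y : Fin d → ℝ) : V :=
  ∑ ν ∈ Λ, (∏ j, y j ^ ν j) • a ν

/-- `δ_m(v)`: the error of best uniform approximation of `v` on `Y = [-1,1]^d`
by `V`-valued polynomials supported on a downward closed index set of cardinality `m`. -/
noncomputable def deltaApprox {d : ℕ} {V : Type*} [NormedAddCommGroup V] [Module ℝ V]
    (v : (Fin d → ℝ) → V) (m : ℕ) : ℝ :=
  sInf { e | ∃ (Λ : Finset (Fin d → ℕ)) (a : (Fin d → ℕ) → V),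
    DownwardClosed Λ ∧ Λ.card = m ∧ e = ⨆ y ∈ cube d, ‖v y - polyEval Λ a y‖ }

/-- Membership in the approximation class `A^r`: `δ_m(v) ≤ C m^{-r}` for all `m ≥ 1`. -/
def MemA {d : ℕ} {V : Type*} [NormedAddCommGroup V] [Module ℝ V]
    (r : ℝ) (v : (Fin d → ℝ) → V) : Prop :=
  ∃ C : ℝ, 0 ≤ C ∧ ∀ m : ℕ, 1 ≤ m → deltaApprox v m ≤ C * (m : ℝ) ^ (-r)

/-- The seminorm `|v|_{A^r}`: the smallest constant `C ≥ 0` with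
`δ_m(v) ≤ C m^{-r}` for all `m ≥ 1`. -/
noncomputable def semiA {d : ℕ} {V : Type*} [NormedAddCommGroup V] [Module ℝ V]
    (r : ℝ) (v : (Fin d → ℝ) → V) : ℝ :=
  sInf { C | 0 ≤ C ∧ ∀ m : ℕ, 1 ≤ m → deltaApprox v m ≤ C * (m : ℝ) ^ (-r) }

/-- The norm `‖v‖_{A^r} = max{‖v‖_{L^∞(Y,V)}, |v|_{A^r}}`. -/
noncomputable def normA {d : ℕ} {V : Type*} [NormedAddCommGroup V] [Module ℝ V]
    (r : ℝ) (v : (Fin d → ℝ) → V) : ℝ :=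
  max (⨆ y ∈ cube d, ‖v y‖) (semiA r v)

/-- The uniform probability measure on the cube `Y = [-1,1]^d`. -/
noncomputable def uniformCube (d : ℕ) : Measure (Fin d → ℝ) :=
  Measure.pi fun _ => (2 : ENNReal)⁻¹ • (volume.restrict (Set.Icc (-1 : ℝ) 1))

/-- The tensor product Chebychev probability measure on the cube `Y = [-1,1]^d`,
`dρ_C(y) = ∏_j dy_j / (π √(1 - y_j²))`. -/
noncomputable def chebCube (d : ℕ) : Measure (Fin d → ℝ) :=
  Measure.pi fun _ =>
    (volume.restrict (Set.Icc (-1 : ℝ) 1)).withDensity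
      fun t => ENNReal.ofReal (1 / (Real.pi * Real.sqrt (1 - t ^ 2)))

/-! An orthonormal family `(φ_i)_{i ∈ Λ}` gives the inverse inequality
`‖P(y)‖² ≤ (∑_{i ∈ Λ} φ_i(y)²) ∫ ‖P‖²` on its span. For the tensorised Chebyshev polynomials indexed
by a downward closed `Λ`, the factor is at most `(#Λ)^β` with `2 ^ β = 3`, as one sees by peeling
off the top layer of `Λ` in one direction. Hence `‖P‖²` is bounded by `(#Λ)^β` times its mean, and
the Paley–Zygmund inequality shows that a random point sees at least a quarter of that mean with
probability at least `3 / (4 (#Λ)^β)`. Applied to a polynomial `P` that approximates `v` within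
`M / (4 m^α)`, where `β = 2α`, this gives the success probability of one draw; the `N` draws are
independent. -/

section PowerInequalities

lemma add_le_add_of_convexOn {E : Type*} [AddCommGroup E] [Module ℝ E] {s : Set E} {f : E → ℝ}
    (hf : ConvexOn ℝ s f) {x y z w : E} (hx : x ∈ s) (hw : w ∈ s) (hy : y ∈ segment ℝ x w)
    (hyz : y + z = x + w) : f y + f z ≤ f x + f w := by
  obtain ⟨p, q, hp, hq, hpq, rfl⟩ := hy
  obtain rfl : q = 1 - p := eq_sub_of_add_eq' hpq
  obtain rfl : z = (1 - p) • x + p • w := by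
    rw [eq_sub_of_add_eq' hyz]
    module
  have hy := hf.2 hx hw hp hq hpq
  have hz := hf.2 hx hw hq hp (sub_add_cancel 1 p)
  simp only [smul_eq_mul] at hy hz
  linear_combination hy + hz

lemma three_le_two_rpow_two_mul {α : ℝ} (hα : Real.log 3 / (2 * Real.log 2) ≤ α) :
    3 ≤ (2 : ℝ) ^ (2 * α) := by
  have hlog2 : 0 < Real.log 2 := Real.log_pos one_lt_two
  rw [div_le_iff₀ (by positivity)] at hα
  exact Real.le_rpow_of_log_le two_pos (by linarith)

lemma one_le_of_three_le_two_rpow {β : ℝ} (hβ : 3 ≤ (2 : ℝ) ^ β) : 1 ≤ β := by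
  by_contra! h
  have hle := Real.rpow_le_rpow_of_exponent_le one_le_two h.le
  rw [Real.rpow_one] at hle
  linarith

lemma rpow_add_two_mul_rpow_le {β a b : ℝ} (hβ : 3 ≤ (2 : ℝ) ^ β) (hb : 0 ≤ b) (hab : b ≤ a) :
    a ^ β + 2 * b ^ β ≤ (a + b) ^ β := by
  have hconv : a ^ β + (b + b) ^ β ≤ b ^ β + (a + b) ^ β :=
    add_le_add_of_convexOn (convexOn_rpow (one_le_of_three_le_two_rpow hβ)) hb
      (add_nonneg (hb.trans hab) hb)
      (segment_eq_Icc (by linarith : b ≤ a + b) ▸ ⟨hab, by linarith⟩) (by ring)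
  have hdouble : 3 * b ^ β ≤ (b + b) ^ β := by
    rw [← two_mul, Real.mul_rpow zero_le_two hb]
    exact mul_le_mul_of_nonneg_right hβ (Real.rpow_nonneg hb β)
  linarith

end PowerInequalities

section DownwardClosedSets

variable {d : ℕ} {Λ : Finset (Fin d → ℕ)}

/-- The slice `{ν ∈ Λ | ν_j = k}` of an index set, projected onto the hyperplane `ν_j = 0`. -/
def slice (Λ : Finset (Fin d → ℕ)) (j : Fin d) (k : ℕ) : Finset (Fin d → ℕ) :=
  {ν ∈ Λ | ν j = k}.image fun ν => Function.update ν j 0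

/-- The factor `1 / ∫ T_ν² dρ_C` which normalises the tensorised Chebyshev polynomial `T_ν` in
`L²(ρ_C)`: each nonzero `ν_j` contributes a factor `2`. -/
def chebWeight (ν : Fin d → ℕ) : ℝ := ∏ j, if ν j = 0 then 1 else 2

lemma chebWeight_pos (ν : Fin d → ℕ) : 0 < chebWeight ν :=
  Finset.prod_pos fun _ _ => by split_ifs <;> norm_num

lemma chebWeight_eq_two_mul_update (ν : Fin d → ℕ) {j : Fin d} (hj : ν j ≠ 0) :
    chebWeight ν = 2 * chebWeight (Function.update ν j 0) := by
  simp only [chebWeight, ← Finset.mul_prod_erase _ _ (Finset.mem_univ j), if_neg hj,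
    Function.update_self, if_true, one_mul]
  congr 1
  refine Finset.prod_congr rfl fun i hi => ?_
  rw [Function.update_of_ne (Finset.ne_of_mem_erase hi)]

lemma injOn_update_zero (Λ : Finset (Fin d → ℕ)) (j : Fin d) (k : ℕ) :
    Set.InjOn (fun ν : Fin d → ℕ => Function.update ν j 0) ({ν ∈ Λ | ν j = k} : Finset _) := by
  intro ν hν μ hμ h
  have hj : ν j = μ j := (Finset.mem_filter.1 hν).2.trans (Finset.mem_filter.1 hμ).2.symm
  have hrestore := congrArg (Function.update · j (ν j)) h
  simp only [Function.update_idem, Function.update_eq_self] at hrestore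
  rw [hrestore, hj, Function.update_eq_self]

lemma DownwardClosed.filter_lt (hΛ : DownwardClosed Λ) (j : Fin d) (k : ℕ) :
    DownwardClosed {ν ∈ Λ | ν j < k} := fun ν hν μ hμν =>
  have ⟨hνΛ, hνk⟩ := Finset.mem_filter.1 hν
  Finset.mem_filter.2 ⟨hΛ ν hνΛ μ hμν, (hμν j).trans_lt hνk⟩

lemma downwardClosed_slice (hΛ : DownwardClosed Λ) (j : Fin d) (k : ℕ) :
    DownwardClosed (slice Λ j k) := by
  intro ν hν μ hμν
  obtain ⟨ξ, hξ, rfl⟩ := Finset.mem_image.1 hν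
  obtain ⟨hξΛ, rfl⟩ := Finset.mem_filter.1 hξ
  obtain ⟨hμj, hμξ⟩ := le_update_iff.1 hμν
  refine Finset.mem_image.2 ⟨Function.update μ j (ξ j), Finset.mem_filter.2
    ⟨hΛ ξ hξΛ _ (update_le_iff.2 ⟨le_rfl, hμξ⟩), Function.update_self ..⟩, ?_⟩
  rw [Function.update_idem, Function.update_eq_self_iff, Nat.le_zero.1 hμj]

lemma DownwardClosed.slice_subset_filter_lt (hΛ : DownwardClosed Λ) (j : Fin d) {k : ℕ}
    (hk : 0 < k) : slice Λ j k ⊆ {ν ∈ Λ | ν j < k} := by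
  intro ν hν
  obtain ⟨ξ, hξ, rfl⟩ := Finset.mem_image.1 hν
  refine Finset.mem_filter.2 ⟨hΛ ξ (Finset.mem_filter.1 hξ).1 _ ?_, by simpa using hk⟩
  exact update_le_iff.2 ⟨Nat.zero_le _, fun _ _ => le_rfl⟩

lemma sum_filter_lt_add_sum_filter_eq {j : Fin d} {k : ℕ} (hk : ∀ ν ∈ Λ, ν j ≤ k)
    (f : (Fin d → ℕ) → ℝ) :
    ∑ ν ∈ Λ with ν j < k, f ν + ∑ ν ∈ Λ with ν j = k, f ν = ∑ ν ∈ Λ, f ν := by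
  have htop : {ν ∈ Λ | ν j = k} = {ν ∈ Λ | ¬ν j < k} :=
    Finset.filter_congr fun ν hν => by
      have := hk ν hν
      omega
  rw [htop, Finset.sum_filter_add_sum_filter_not]

lemma card_filter_lt_add_card_slice {j : Fin d} {k : ℕ} (hk : ∀ ν ∈ Λ, ν j ≤ k) :
    ({ν ∈ Λ | ν j < k}.card : ℝ) + (slice Λ j k).card = Λ.card := by
  rw [slice, Finset.card_image_of_injOn (injOn_update_zero Λ j k)]
  simpa using sum_filter_lt_add_sum_filter_eq hk 1

lemma sum_chebWeight_filter_lt_add_slice {j : Fin d} {k : ℕ} (hk : ∀ ν ∈ Λ, ν j ≤ k)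
    (hk0 : k ≠ 0) : ∑ ν ∈ Λ with ν j < k, chebWeight ν + 2 * ∑ ν ∈ slice Λ j k, chebWeight ν =
      ∑ ν ∈ Λ, chebWeight ν := by
  rw [← sum_filter_lt_add_sum_filter_eq hk chebWeight, slice,
    Finset.sum_image (injOn_update_zero Λ j k), Finset.mul_sum]
  congr 1
  refine Finset.sum_congr rfl fun ν hν => (chebWeight_eq_two_mul_update ν ?_).symm
  rwa [(Finset.mem_filter.1 hν).2]

theorem DownwardClosed.sum_chebWeight_le {β : ℝ} (hβ : 3 ≤ (2 : ℝ) ^ β) (hΛ : DownwardClosed Λ) :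
    ∑ ν ∈ Λ, chebWeight ν ≤ (Λ.card : ℝ) ^ β := by
  induction Λ using Finset.strongInduction with
  | H Λ ih =>
    by_cases hzero : Λ ⊆ {0}
    · rcases Finset.subset_singleton_iff.1 hzero with rfl | rfl
      · simpa using Real.rpow_nonneg le_rfl β
      · simp [chebWeight]
    obtain ⟨ν, hν, j, hj⟩ : ∃ ν ∈ Λ, ∃ j, ν j ≠ 0 := by
      simpa [Finset.subset_iff, funext_iff] using hzero
    obtain ⟨ν', hν', hmax⟩ := Λ.exists_max_image (· j) ⟨ν, hν⟩
    have hk0 : 0 < ν' j := (Nat.pos_of_ne_zero hj).trans_le (hmax ν hν)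
    have hsub := hΛ.slice_subset_filter_lt j hk0
    have hlt : {ν ∈ Λ | ν j < ν' j} ⊂ Λ := Finset.filter_ssubset.2 ⟨ν', hν', lt_irrefl _⟩
    have hlower := ih _ hlt (hΛ.filter_lt j _)
    have hupper := ih _ (hsub.trans_ssubset hlt) (downwardClosed_slice hΛ j _)
    have hcard : ((slice Λ j (ν' j)).card : ℝ) ≤ {ν ∈ Λ | ν j < ν' j}.card :=
      mod_cast Finset.card_le_card hsub
    have hpow := rpow_add_two_mul_rpow_le hβ (Nat.cast_nonneg _) hcard
    rw [card_filter_lt_add_card_slice hmax] at hpow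
    linarith [sum_chebWeight_filter_lt_add_slice hmax hk0.ne']

lemma exists_downwardClosed_card_eq (hd : 0 < d) (m : ℕ) :
    ∃ Λ : Finset (Fin d → ℕ), DownwardClosed Λ ∧ Λ.card = m := by
  cases m with
  | zero => exact ⟨∅, by simp [DownwardClosed], rfl⟩
  | succ n =>
    refine ⟨Finset.Iic (Pi.single ⟨0, hd⟩ n), fun ν hν μ hμν => ?_, ?_⟩
    · exact Finset.mem_Iic.2 (hμν.trans (Finset.mem_Iic.1 hν))
    · rw [Pi.card_Iic, Finset.prod_eq_single ⟨0, hd⟩] <;> simp +contextual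

end DownwardClosedSets

section Orthogonality

variable {X ι : Type*} [MeasurableSpace X] [DecidableEq ι] {μ : Measure X} {φ : ι → X → ℝ}
  {w : ι → ℝ}

lemma integral_sq_sum_mul_of_orthogonal (hint : ∀ i j, Integrable (fun x => φ i x * φ j x) μ)
    (horth : ∀ i j, ∫ x, φ i x * φ j x ∂μ = if i = j then (w i)⁻¹ else 0)
    (s : Finset ι) (c : ι → ℝ) :
    ∫ x, (∑ i ∈ s, φ i x * c i) ^ 2 ∂μ = ∑ i ∈ s, (w i)⁻¹ * c i ^ 2 := by
  simp_rw [sq, Finset.sum_mul_sum, mul_mul_mul_comm]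
  have hint' (i j : ι) := (hint i j).mul_const (c i * c j)
  rw [integral_finsetSum _ fun i _ => integrable_finsetSum _ fun j _ => hint' i j]
  refine Finset.sum_congr rfl fun i hi => ?_
  rw [integral_finsetSum _ fun j _ => hint' i j]
  simp only [integral_mul_const, horth, ite_mul, zero_mul, Finset.sum_ite_eq, if_pos hi]

lemma sq_sum_mul_le_of_orthogonal (hw : ∀ i, 0 < w i)
    (hint : ∀ i j, Integrable (fun x => φ i x * φ j x) μ)
    (horth : ∀ i j, ∫ x, φ i x * φ j x ∂μ = if i = j then (w i)⁻¹ else 0)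
    (s : Finset ι) (c : ι → ℝ) (x : X) :
    (∑ i ∈ s, φ i x * c i) ^ 2 ≤
      (∑ i ∈ s, w i * φ i x ^ 2) * ∫ y, (∑ i ∈ s, φ i y * c i) ^ 2 ∂μ := by
  rw [integral_sq_sum_mul_of_orthogonal hint horth]
  refine Finset.sum_sq_le_sum_mul_sum_of_sq_le_mul s (fun i _ => ?_) (fun i _ => ?_)
    fun i _ => le_of_eq ?_
  · exact mul_nonneg (hw i).le (sq_nonneg _)
  · exact mul_nonneg (inv_nonneg.2 (hw i).le) (sq_nonneg _)
  · rw [mul_mul_mul_comm, mul_inv_cancel₀ (hw i).ne', one_mul, mul_pow]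

/-- Testing against a norming functional reduces the vector-valued case to the scalar one. -/
theorem sq_norm_sum_smul_le_of_orthogonal {E : Type*} [NormedAddCommGroup E] [NormedSpace ℝ E]
    (hw : ∀ i, 0 < w i) (hint : ∀ i j, Integrable (fun x => φ i x * φ j x) μ)
    (horth : ∀ i j, ∫ x, φ i x * φ j x ∂μ = if i = j then (w i)⁻¹ else 0)
    (s : Finset ι) (c : ι → E) (hP : Integrable (fun y => ‖∑ i ∈ s, φ i y • c i‖ ^ 2) μ) (x : X) :
    ‖∑ i ∈ s, φ i x • c i‖ ^ 2 ≤
      (∑ i ∈ s, w i * φ i x ^ 2) * ∫ y, ‖∑ i ∈ s, φ i y • c i‖ ^ 2 ∂μ := by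
  obtain ⟨g, hg, hgx⟩ := exists_dual_vector'' ℝ (∑ i ∈ s, φ i x • c i)
  have hgP (y : X) : g (∑ i ∈ s, φ i y • c i) = ∑ i ∈ s, φ i y * g (c i) := by
    simp only [map_sum, map_smul, smul_eq_mul]
  have hgle (y : X) : (∑ i ∈ s, φ i y * g (c i)) ^ 2 ≤ ‖∑ i ∈ s, φ i y • c i‖ ^ 2 := by
    rw [← hgP, ← sq_abs, ← Real.norm_eq_abs]
    gcongr
    exact (g.le_of_opNorm_le hg _).trans_eq (one_mul _)
  calc ‖∑ i ∈ s, φ i x • c i‖ ^ 2 = (∑ i ∈ s, φ i x * g (c i)) ^ 2 := by rw [← hgP, hgx]; rfl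
    _ ≤ (∑ i ∈ s, w i * φ i x ^ 2) * ∫ y, (∑ i ∈ s, φ i y * g (c i)) ^ 2 ∂μ :=
      sq_sum_mul_le_of_orthogonal hw hint horth s _ x
    _ ≤ _ := by
      refine mul_le_mul_of_nonneg_left ?_
        (Finset.sum_nonneg fun i _ => mul_nonneg (hw i).le (sq_nonneg _))
      exact integral_mono_of_nonneg (.of_forall fun _ => sq_nonneg _) hP (.of_forall hgle)

end Orthogonality

section ChebyshevMeasure

open Polynomial.Chebyshev

/-- The Chebyshev probability measure `dt / (π √(1 - t²))` on `[-1, 1]`. -/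
noncomputable def chebMeasure : Measure ℝ :=
  (volume.restrict (Set.Icc (-1 : ℝ) 1)).withDensity
    fun t => ENNReal.ofReal (1 / (Real.pi * Real.sqrt (1 - t ^ 2)))

lemma chebMeasure_eq_smul_measureT : chebMeasure = ENNReal.ofReal (1 / Real.pi) • measureT := by
  rw [chebMeasure, measureT, ← Measure.restrict_congr_set Ioc_ae_eq_Icc,
    restrict_withDensity measurableSet_Ioc, ← withDensity_smul' _ _ ENNReal.ofReal_ne_top]
  congr 1 with t
  rw [Pi.smul_apply, smul_eq_mul, ← one_div_mul_one_div, ENNReal.ofReal_mul (by positivity),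
    one_div (√_), ← Real.sqrt_inv, ENNReal.ofReal_eq_coe_nnreal (Real.sqrt_nonneg _)]

lemma integral_T_mul_T_chebMeasure (n k : ℕ) :
    ∫ t, (T ℝ n).eval t * (T ℝ k).eval t ∂chebMeasure =
      if n = k then (if n = 0 then 1 else 2)⁻¹ else 0 := by
  rw [chebMeasure_eq_smul_measureT, integral_smul_measure, ENNReal.toReal_ofReal (by positivity),
    smul_eq_mul]
  split_ifs with hnk hn
  · subst hnk hn
    rw [Nat.cast_zero, integral_eval_T_real_mul_self_measureT_zero, inv_one,
      one_div_mul_cancel Real.pi_ne_zero]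
  · subst hnk
    rw [integral_T_real_mul_self_measureT_of_ne_zero hn]
    field_simp
  · rw [integral_eval_T_real_mul_eval_T_real_measureT_of_ne hnk, mul_zero]

instance : IsProbabilityMeasure chebMeasure := by
  have hmass : chebMeasure.real Set.univ = 1 := by
    simpa using integral_T_mul_T_chebMeasure 0 0
  exact ⟨(ENNReal.toReal_eq_one_iff _).1 hmass⟩

lemma ae_mem_Icc_chebMeasure : ∀ᵐ t ∂chebMeasure, t ∈ Set.Icc (-1 : ℝ) 1 :=
  (withDensity_absolutelyContinuous _ _).ae_le (ae_restrict_mem measurableSet_Icc)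

end ChebyshevMeasure

section ProductMeasures

lemma ae_pi_forall {ι : Type*} [Fintype ι] {X : ι → Type*} [∀ i, MeasurableSpace (X i)]
    {μ : ∀ i, Measure (X i)} [∀ i, SigmaFinite (μ i)] {p : ∀ i, X i → Prop}
    (h : ∀ i, ∀ᵐ x ∂μ i, p i x) : ∀ᵐ x ∂Measure.pi μ, ∀ i, p i (x i) :=
  Filter.eventually_all.2 fun i => Measure.tendsto_eval_ae_ae.eventually (h i)

/-- The complementary event is the product of the events `x i ∉ B`, hence has probability at most
`(1 - p) ^ #ι`. -/
lemma ofReal_one_sub_pow_le_pi_exists_mem {ι X : Type*} [Fintype ι] [MeasurableSpace X]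
    {μ : Measure X} [IsProbabilityMeasure μ] {B : Set X} (hB : NullMeasurableSet B μ) {p : ℝ}
    (hp : p ≤ μ.real B) :
    ENNReal.ofReal (1 - (1 - p) ^ Fintype.card ι) ≤
      Measure.pi (fun _ : ι => μ) {x | ∃ i, x i ∈ B} := by
  have hcompl : {x : ι → X | ∃ i, x i ∈ B}ᶜ = Set.univ.pi fun _ => Bᶜ := by
    ext x
    simp
  have hmiss : Measure.pi (fun _ : ι => μ) {x | ∃ i, x i ∈ B}ᶜ ≤
      ENNReal.ofReal ((1 - p) ^ Fintype.card ι) := by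
    rw [hcompl, Measure.pi_pi, Finset.prod_const, Finset.card_univ, ← ofReal_measureReal,
      probReal_compl_eq_one_sub₀ hB, ← ENNReal.ofReal_pow (sub_nonneg.2 measureReal_le_one)]
    gcongr
    exact sub_nonneg.2 measureReal_le_one
  have hp1 : 0 ≤ 1 - p := sub_nonneg.2 (hp.trans measureReal_le_one)
  rw [ENNReal.ofReal_sub _ (pow_nonneg hp1 _), ENNReal.ofReal_one, tsub_le_iff_right,
    ← measure_univ (μ := Measure.pi fun _ : ι => μ)]
  exact (measure_univ_le_add_compl _).trans (by gcongr)

/-- The Paley–Zygmund inequality, with an upper bound on `f` in place of a second moment. -/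
theorem one_sub_div_le_measureReal_mul_integral_le {Ω : Type*} [MeasurableSpace Ω]
    {μ : Measure Ω} [IsProbabilityMeasure μ] {f : Ω → ℝ} (hf : Integrable f μ)
    (hpos : 0 < ∫ ω, f ω ∂μ) {K θ : ℝ} (hK : 0 < K) (hθ : 0 ≤ θ)
    (hle : ∀ᵐ ω ∂μ, f ω ≤ K * ∫ ω, f ω ∂μ) :
    (1 - θ) / K ≤ μ.real {ω | θ * ∫ ω, f ω ∂μ ≤ f ω} := by
  set I := ∫ ω, f ω ∂μ
  set B := {ω | θ * I ≤ f ω}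
  have hB : NullMeasurableSet B μ := nullMeasurableSet_le aemeasurable_const hf.aemeasurable
  have hlarge : ∫ ω in B, f ω ∂μ ≤ μ.real B * (K * I) := by
    rw [← smul_eq_mul, ← setIntegral_const]
    exact setIntegral_mono_ae hf.integrableOn integrableOn_const hle
  have hsmall : ∫ ω in Bᶜ, f ω ∂μ ≤ θ * I :=
    calc ∫ ω in Bᶜ, f ω ∂μ ≤ ∫ _ in Bᶜ, θ * I ∂μ :=
          setIntegral_mono_on_ae₀ hf.integrableOn integrableOn_const hB.compl
            (.of_forall fun ω hω => (not_le.1 (show ¬θ * I ≤ f ω from hω)).le)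
      _ = μ.real Bᶜ * (θ * I) := setIntegral_const _
      _ ≤ θ * I := mul_le_of_le_one_left (by positivity) measureReal_le_one
  have hsplit : I ≤ μ.real B * (K * I) + θ * I :=
    (integral_add_compl₀ hB hf).symm.le.trans (add_le_add hlarge hsmall)
  rw [div_le_iff₀ hK]
  exact le_of_mul_le_mul_right (by linarith) hpos

end ProductMeasures

section TensorChebyshev

open Polynomial.Chebyshev

variable {d : ℕ}

/-- The tensorised Chebyshev polynomial `T_ν(y) = ∏_j T_{ν_j}(y_j)`. -/
noncomputable def tensorT (ν : Fin d → ℕ) (y : Fin d → ℝ) : ℝ := ∏ j, (T ℝ (ν j)).eval (y j)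

instance : IsProbabilityMeasure (chebCube d) :=
  inferInstanceAs (IsProbabilityMeasure (Measure.pi fun _ : Fin d => chebMeasure))

lemma ae_mem_cube_chebCube : ∀ᵐ y ∂chebCube d, y ∈ cube d :=
  (ae_pi_forall (μ := fun _ => chebMeasure) fun _ => ae_mem_Icc_chebMeasure).mono
    fun _ hy j _ => hy j

lemma isCompact_cube : IsCompact (cube d) := isCompact_univ_pi fun _ => isCompact_Icc

lemma integrable_chebCube {E : Type*} [NormedAddCommGroup E] {f : (Fin d → ℝ) → E}
    (hf : ContinuousOn f (cube d)) : Integrable f (chebCube d) := by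
  rw [← Measure.restrict_eq_self_of_ae_mem (ae_mem_cube_chebCube (d := d))]
  exact hf.integrableOn_compact isCompact_cube

lemma continuous_tensorT (ν : Fin d → ℕ) : Continuous (tensorT ν) := by
  unfold tensorT
  fun_prop

lemma sq_tensorT_le_one (ν : Fin d → ℕ) {y : Fin d → ℝ} (hy : y ∈ cube d) :
    tensorT ν y ^ 2 ≤ 1 := by
  rw [sq_le_one_iff_abs_le_one, tensorT, Finset.abs_prod]
  exact Finset.prod_le_one (fun _ _ => abs_nonneg _) fun j _ =>
    abs_eval_T_real_le_one _ (abs_le.2 (hy j trivial))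

lemma integral_tensorT_mul_tensorT (ν μ : Fin d → ℕ) :
    ∫ y, tensorT ν y * tensorT μ y ∂chebCube d = if ν = μ then (chebWeight ν)⁻¹ else 0 := by
  have hprod : ∫ y, tensorT ν y * tensorT μ y ∂chebCube d =
      ∏ j, ∫ t, (T ℝ (ν j)).eval t * (T ℝ (μ j)).eval t ∂chebMeasure := by
    simp_rw [tensorT, ← Finset.prod_mul_distrib]
    exact integral_fintype_prod_eq_prod fun j t => (T ℝ (ν j)).eval t * (T ℝ (μ j)).eval t
  simp_rw [hprod, integral_T_mul_T_chebMeasure]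
  split_ifs with h
  · simp [h, chebWeight, Finset.prod_inv_distrib]
  · obtain ⟨j, hj⟩ := Function.ne_iff.1 h
    exact Finset.prod_eq_zero (Finset.mem_univ j) (if_neg hj)

end TensorChebyshev

section Polynomials

lemma exists_pow_eq_sum_eval (S : Polynomial.Sequence ℝ) (n : ℕ) :
    ∃ c : ℕ → ℝ, ∀ x, x ^ n = ∑ k ∈ Finset.Iic n, c k * (S k).eval x := by
  have hmem : (Polynomial.X ^ n : Polynomial ℝ) ∈ Submodule.span ℝ (S '' Finset.Iic n) := by
    rw [Finset.coe_Iic, S.span_degreeLE fun k _ => by simp, Polynomial.mem_degreeLE]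
    exact Polynomial.degree_X_pow_le n
  obtain ⟨c, hc⟩ := (Submodule.mem_span_image_finset_iff_exists_fun' ℝ).1 hmem
  refine ⟨c, fun x => ?_⟩
  simpa [Polynomial.eval_finsetSum] using congrArg (Polynomial.eval x) hc.symm

lemma DownwardClosed.exists_polyEval_eq_sum_smul {d : ℕ} {V : Type*} [AddCommGroup V] [Module ℝ V]
    {Λ : Finset (Fin d → ℕ)} (hΛ : DownwardClosed Λ) (S : Polynomial.Sequence ℝ)
    (a : (Fin d → ℕ) → V) :
    ∃ c : (Fin d → ℕ) → V, ∀ y, polyEval Λ a y = ∑ μ ∈ Λ, (∏ j, (S (μ j)).eval (y j)) • c μ := by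
  classical
  choose q hq using exists_pow_eq_sum_eval S
  refine ⟨fun μ => ∑ ν ∈ Λ with μ ≤ ν, (∏ j, q (ν j) (μ j)) • a ν, fun y => ?_⟩
  have hmonomial (ν : Fin d → ℕ) :
      ∏ j, y j ^ ν j = ∑ μ ∈ Finset.Iic ν, (∏ j, (S (μ j)).eval (y j)) * ∏ j, q (ν j) (μ j) := by
    simp_rw [hq, Finset.prod_univ_sum, ← Finset.prod_mul_distrib, mul_comm]
    rfl
  simp_rw [polyEval, hmonomial, Finset.sum_smul, Finset.smul_sum, mul_smul]
  refine Finset.sum_comm' fun ν μ => ?_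
  simp only [Finset.mem_Iic, Finset.mem_filter]
  exact ⟨fun ⟨hν, hμν⟩ => ⟨⟨hν, hμν⟩, hΛ ν hν μ hμν⟩, fun h => h.1⟩

lemma continuous_polyEval {d : ℕ} {V : Type*} [NormedAddCommGroup V] [NormedSpace ℝ V]
    (Λ : Finset (Fin d → ℕ)) (a : (Fin d → ℕ) → V) : Continuous (polyEval Λ a) := by
  unfold polyEval
  fun_prop

end Polynomials

section InverseInequality

variable {d : ℕ} {V : Type*} [NormedAddCommGroup V] [NormedSpace ℝ V] {Λ : Finset (Fin d → ℕ)}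

lemma integrable_sq_norm_polyEval (Λ : Finset (Fin d → ℕ)) (a : (Fin d → ℕ) → V) :
    Integrable (fun y => ‖polyEval Λ a y‖ ^ 2) (chebCube d) :=
  integrable_chebCube ((continuous_polyEval Λ a).norm.pow 2).continuousOn

theorem DownwardClosed.sq_norm_polyEval_le {β : ℝ} (hβ : 3 ≤ (2 : ℝ) ^ β)
    (hΛ : DownwardClosed Λ) (a : (Fin d → ℕ) → V) {y : Fin d → ℝ} (hy : y ∈ cube d) :
    ‖polyEval Λ a y‖ ^ 2 ≤ (Λ.card : ℝ) ^ β * ∫ z, ‖polyEval Λ a z‖ ^ 2 ∂chebCube d := by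
  obtain ⟨c, hc⟩ : ∃ c : (Fin d → ℕ) → V, ∀ z, polyEval Λ a z = ∑ ν ∈ Λ, tensorT ν z • c ν :=
    hΛ.exists_polyEval_eq_sum_smul (Polynomial.Chebyshev.chebyshevTsequence ℝ) a
  have hint := integrable_sq_norm_polyEval Λ a
  simp only [hc] at hint ⊢
  refine (sq_norm_sum_smul_le_of_orthogonal chebWeight_pos (fun ν μ => ?_)
    integral_tensorT_mul_tensorT Λ c hint y).trans ?_
  · exact integrable_chebCube ((continuous_tensorT ν).mul (continuous_tensorT μ)).continuousOn
  · refine mul_le_mul_of_nonneg_right ?_ (integral_nonneg fun _ => sq_nonneg _)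
    exact (Finset.sum_le_sum fun ν _ => mul_le_of_le_one_right (chebWeight_pos ν).le
      (sq_tensorT_le_one ν hy)).trans (hΛ.sum_chebWeight_le hβ)

lemma DownwardClosed.norm_polyEval_le {α : ℝ} (hα : 3 ≤ (2 : ℝ) ^ (2 * α))
    (hΛ : DownwardClosed Λ) (a : (Fin d → ℕ) → V) {y : Fin d → ℝ} (hy : y ∈ cube d) :
    ‖polyEval Λ a y‖ ≤ (Λ.card : ℝ) ^ α * √(∫ z, ‖polyEval Λ a z‖ ^ 2 ∂chebCube d) := by
  refine (sq_le_sq₀ (norm_nonneg _) (by positivity)).1 ?_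
  rw [mul_pow, Real.sq_sqrt (integral_nonneg fun _ => sq_nonneg _), ← Real.rpow_mul_natCast
    (Nat.cast_nonneg _), Nat.cast_two, mul_comm α]
  exact hΛ.sq_norm_polyEval_le hα a hy

theorem DownwardClosed.three_div_le_chebCube_real_half_le_norm_polyEval {β : ℝ}
    (hβ : 3 ≤ (2 : ℝ) ^ β) (hΛ : DownwardClosed Λ) (hne : Λ.Nonempty) (a : (Fin d → ℕ) → V)
    (hpos : 0 < √(∫ z, ‖polyEval Λ a z‖ ^ 2 ∂chebCube d)) :
    3 / (4 * (Λ.card : ℝ) ^ β) ≤ (chebCube d).real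
      {y | √(∫ z, ‖polyEval Λ a z‖ ^ 2 ∂chebCube d) / 2 ≤ ‖polyEval Λ a y‖} := by
  set I := ∫ z, ‖polyEval Λ a z‖ ^ 2 ∂chebCube d
  have hpz : (1 - 1 / 4) / (Λ.card : ℝ) ^ β ≤
      (chebCube d).real {y | 1 / 4 * I ≤ ‖polyEval Λ a y‖ ^ 2} :=
    one_sub_div_le_measureReal_mul_integral_le (integrable_sq_norm_polyEval Λ a)
      (Real.sqrt_pos.1 hpos) (Real.rpow_pos_of_pos (mod_cast hne.card_pos) β) (by norm_num)
      (ae_mem_cube_chebCube.mono fun y hy => hΛ.sq_norm_polyEval_le hβ a hy)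
  calc 3 / (4 * (Λ.card : ℝ) ^ β) = (1 - 1 / 4) / (Λ.card : ℝ) ^ β := by
        rw [← div_div]
        norm_num
    _ ≤ _ := hpz
    _ ≤ _ := measureReal_mono fun y hy => ?_
  refine (sq_le_sq₀ (by positivity) (norm_nonneg _)).1 ?_
  rw [div_pow, Real.sq_sqrt (Real.sqrt_pos.1 hpos).le]
  linarith [hy.out]

end InverseInequality

section ApproximationClass

variable {d : ℕ} {V : Type*} [NormedAddCommGroup V] [Module ℝ V] {v : (Fin d → ℝ) → V}

lemma deltaApprox_le_semiA_mul_rpow {r : ℝ} (hv : MemA r v) {m : ℕ} (hm : 1 ≤ m) :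
    deltaApprox v m ≤ semiA r v * (m : ℝ) ^ (-r) := by
  have hmr : 0 < (m : ℝ) ^ (-r) := Real.rpow_pos_of_pos (mod_cast hm) _
  rw [← div_le_iff₀ hmr]
  exact le_csInf hv fun C hC => (div_le_iff₀ hmr).2 (hC.2 m hm)

lemma deltaApprox_lt_div_of_mul_rpow_lt {r s M0 M c : ℝ} (hv : MemA r v) (hM0 : semiA r v ≤ M0)
    {m : ℕ} (hm : 1 ≤ m) (hc : 0 < c) (h : c * M0 * (m : ℝ) ^ (-r + s) < M) :
    deltaApprox v m < M / (c * (m : ℝ) ^ s) := by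
  have hm0 : (0 : ℝ) < m := mod_cast hm
  rw [lt_div_iff₀ (mul_pos hc (Real.rpow_pos_of_pos hm0 s))]
  calc deltaApprox v m * (c * (m : ℝ) ^ s) ≤ M0 * (m : ℝ) ^ (-r) * (c * (m : ℝ) ^ s) := by
        gcongr
        exact (deltaApprox_le_semiA_mul_rpow hv hm).trans (by gcongr)
    _ = c * M0 * (m : ℝ) ^ (-r + s) := by
        rw [Real.rpow_add hm0]
        ring
    _ < M := h

end ApproximationClass

section Approximation

variable {d : ℕ} {V : Type*} [NormedAddCommGroup V] [NormedSpace ℝ V] {v : (Fin d → ℝ) → V}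

/-- An unbounded real family has supremum `0`, so a positive supremum certifies boundedness. -/
lemma bddAbove_of_biSup_pos {X : Type*} {s : Set X} {f : X → ℝ} (h : 0 < ⨆ x ∈ s, f x) :
    BddAbove (f '' s) := by
  by_contra hf
  rw [Set.image_eq_range] at hf
  rw [cbiSup_of_not_bddAbove hf, Real.sSup_empty] at h
  exact h.false

lemma exists_polyEval_near_of_deltaApprox_lt (hd : 0 < d)
    (hv : BddAbove ((fun y => ‖v y‖) '' cube d)) {m : ℕ} {ε : ℝ} (hε : deltaApprox v m < ε) :
    ∃ (Λ : Finset (Fin d → ℕ)) (a : (Fin d → ℕ) → V), DownwardClosed Λ ∧ Λ.card = m ∧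
      ∀ y ∈ cube d, ‖v y - polyEval Λ a y‖ < ε := by
  obtain ⟨Λ₀, hΛ₀, hcard₀⟩ := exists_downwardClosed_card_eq hd m
  unfold deltaApprox at hε
  obtain ⟨_, ⟨Λ, a, hΛ, hcard, rfl⟩, hlt⟩ :=
    exists_lt_of_csInf_lt (by exact ⟨_, Λ₀, 0, hΛ₀, hcard₀, rfl⟩) hε
  refine ⟨Λ, a, hΛ, hcard, fun y hy => lt_of_le_of_lt ?_ hlt⟩
  have hbdd : BddAbove ((fun z => ‖v z - polyEval Λ a z‖) '' cube d) := by
    obtain ⟨B, hB⟩ := hv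
    obtain ⟨C, hC⟩ := isCompact_cube.bddAbove_image (continuous_polyEval Λ a).norm.continuousOn
    refine ⟨B + C, ?_⟩
    rintro _ ⟨z, hz, rfl⟩
    exact (norm_sub_le _ _).trans (add_le_add (hB ⟨z, hz, rfl⟩) (hC ⟨z, hz, rfl⟩))
  refine le_ciSup₂ (f := fun z (_ : z ∈ cube d) => ‖v z - polyEval Λ a z‖) (hbdd.mono ?_) y hy
  rintro _ ⟨_, ⟨z, rfl⟩, hz, rfl⟩
  exact ⟨z, hz, rfl⟩

lemma DownwardClosed.iSup_norm_le_of_polyEval_near {Λ : Finset (Fin d → ℕ)} {α : ℝ}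
    (hα : 3 ≤ (2 : ℝ) ^ (2 * α)) (hΛ : DownwardClosed Λ) {a : (Fin d → ℕ) → V} {ε : ℝ} (hε : 0 ≤ ε)
    (hnear : ∀ y ∈ cube d, ‖v y - polyEval Λ a y‖ ≤ ε) :
    ⨆ y ∈ cube d, ‖v y‖ ≤
      (Λ.card : ℝ) ^ α * √(∫ z, ‖polyEval Λ a z‖ ^ 2 ∂chebCube d) + ε := by
  refine Real.iSup_le (fun y => Real.iSup_le (fun hy => ?_) (by positivity)) (by positivity)
  calc ‖v y‖ ≤ ‖polyEval Λ a y‖ + ‖v y - polyEval Λ a y‖ := norm_le_norm_add_norm_sub' _ _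
    _ ≤ _ := add_le_add (hΛ.norm_polyEval_le hα a hy) (hnear y hy)

lemma DownwardClosed.three_mul_div_le_sqrt_integral_of_polyEval_near {Λ : Finset (Fin d → ℕ)}
    {α M : ℝ} (hα : 3 ≤ (2 : ℝ) ^ (2 * α)) (hΛ : DownwardClosed Λ) (hne : Λ.Nonempty)
    (hM : M = ⨆ y ∈ cube d, ‖v y‖) (hMpos : 0 < M) {a : (Fin d → ℕ) → V}
    (hnear : ∀ y ∈ cube d, ‖v y - polyEval Λ a y‖ ≤ M / (4 * (Λ.card : ℝ) ^ α)) :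
    3 * (M / (4 * (Λ.card : ℝ) ^ α)) ≤ √(∫ z, ‖polyEval Λ a z‖ ^ 2 ∂chebCube d) := by
  have hcard : 1 ≤ (Λ.card : ℝ) ^ α :=
    Real.one_le_rpow (mod_cast hne.card_pos) (by linarith [one_le_of_three_le_two_rpow hα])
  have hsup := hM.trans_le (hΛ.iSup_norm_le_of_polyEval_near hα (by positivity) hnear)
  have hε : M / (4 * (Λ.card : ℝ) ^ α) ≤ M / 4 :=
    div_le_div_of_nonneg_left hMpos.le four_pos (by linarith)
  refine le_of_mul_le_mul_left (a := (Λ.card : ℝ) ^ α) ?_ (by positivity)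
  calc (Λ.card : ℝ) ^ α * (3 * (M / (4 * (Λ.card : ℝ) ^ α))) = 3 * M / 4 := by field_simp
    _ ≤ _ := by linarith

end Approximation

theorem statement11_general {d : ℕ} (hd : 0 < d) {V : Type*} [NormedAddCommGroup V]
    [NormedSpace ℝ V]
    (r α : ℝ) (hα : Real.log 3 / (2 * Real.log 2) ≤ α) (v : (Fin d → ℝ) → V) (hv : MemA r v)
    (M0 : ℝ) (hM0 : semiA r v ≤ M0)
    (M : ℝ) (hM : M = ⨆ y ∈ cube d, ‖v y‖) (hMpos : 0 < M)
    (m : ℕ) (hm : 1 ≤ m) (hcond : 4 * M0 * (m : ℝ) ^ (-r + α) < M) (N : ℕ) :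
    ENNReal.ofReal (1 - (1 - 3 / (4 * (m : ℝ) ^ (2 * α))) ^ N) ≤
      (Measure.pi fun _ : Fin N => chebCube d)
        {ys : Fin N → Fin d → ℝ |
          (∀ i, ys i ∈ cube d) ∧ ∃ i, M / (8 * (m : ℝ) ^ α) ≤ ‖v (ys i)‖} := by
  obtain ⟨Λ, a, hΛ, rfl, hnear⟩ := exists_polyEval_near_of_deltaApprox_lt hd
    (bddAbove_of_biSup_pos (hM ▸ hMpos))
    (deltaApprox_lt_div_of_mul_rpow_lt hv hM0 hm four_pos hcond)
  have hα' := three_le_two_rpow_two_mul hα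
  have hne : Λ.Nonempty := Finset.card_pos.1 hm
  have hmean := hΛ.three_mul_div_le_sqrt_integral_of_polyEval_near hα' hne hM hMpos
    fun y hy => (hnear y hy).le
  set s := √(∫ z, ‖polyEval Λ a z‖ ^ 2 ∂chebCube d)
  have hdraw := hΛ.three_div_le_chebCube_real_half_le_norm_polyEval hα' hne a
    (lt_of_lt_of_le (by positivity) hmean)
  have hclosed : IsClosed {y | s / 2 ≤ ‖polyEval Λ a y‖} :=
    isClosed_le continuous_const (continuous_polyEval Λ a).norm
  refine (Fintype.card_fin N ▸ ofReal_one_sub_pow_le_pi_exists_mem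
    hclosed.measurableSet.nullMeasurableSet hdraw).trans (measure_mono_ae ?_)
  filter_upwards [ae_pi_forall fun _ => ae_mem_cube_chebCube] with ys hys
  rintro ⟨i, hi : s / 2 ≤ ‖polyEval Λ a (ys i)‖⟩
  refine ⟨hys, i, ?_⟩
  calc M / (8 * (Λ.card : ℝ) ^ α) = 3 * (M / (4 * (Λ.card : ℝ) ^ α)) / 2 -
        M / (4 * (Λ.card : ℝ) ^ α) := by ring
    _ ≤ ‖polyEval Λ a (ys i)‖ - ‖v (ys i) - polyEval Λ a (ys i)‖ := by
        linarith [hnear _ (hys i)]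
    _ ≤ ‖v (ys i)‖ := by
        rw [norm_sub_rev, sub_le_iff_le_add]
        exact norm_le_norm_add_norm_sub' _ _

theorem statement11 {d : ℕ} (hd : 0 < d) {V : Type*} [NormedAddCommGroup V]
    [InnerProductSpace ℝ V]
    (r α : ℝ) (hα : α = Real.log 3 / (2 * Real.log 2)) (hr : α < r)
    (v : (Fin d → ℝ) → V) (hv : MemA r v)
    (M0 : ℝ) (hM0 : normA r v ≤ M0)
    (M : ℝ) (hM : M = ⨆ y ∈ cube d, ‖v y‖) (hMpos : 0 < M)
    (m : ℕ) (hm : 1 ≤ m) (hcond : 4 * M0 * (m : ℝ) ^ (-r + α) < M)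
    (N : ℕ) (hN : 1 ≤ N) :
    ENNReal.ofReal (1 - (1 - 3 / (4 * (m : ℝ) ^ (2 * α))) ^ N) ≤
      (Measure.pi fun _ : Fin N => chebCube d)
        {ys : Fin N → Fin d → ℝ |
          (∀ i, ys i ∈ cube d) ∧ ∃ i, M / (8 * (m : ℝ) ^ α) ≤ ‖v (ys i)‖} :=
  statement11_general hd r α hα.ge v hv M0 ((le_max_right _ _).trans hM0) M hM hMpos m hm hcond N
end

section
/- Let V be a real Hilbert space, K a compact subset of V with d_n(K) ≤ C0·(max{1,n})^{-s} for all n ≥ 0, for some s > 0 and C0 > 0. Let m ≥ 1 be an integer and let (u^k)_{k≥0} be a weak greedy sequence in K with parameter γ = 1/(8m). Then for every ε > 0 and every integer n ≥ 2^{4 + 10/s}·C0^{1/s}·m^{3/s}·ε^{-1/s}, one has σ_n(K) ≤ ε/(8m). -/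
/-- The Kolmogorov `n`-width of a set `K` in a real inner product space:
the infimum over all subspaces `E` of dimension at most `n` of the worst-case
distance `‖u - P_E u‖ = infDist u E` over `u ∈ K`. -/
noncomputable def kolWidth {V : Type*} [NormedAddCommGroup V] [InnerProductSpace ℝ V]
    (K : Set V) (n : ℕ) : ℝ :=
  ⨅ E : {E : Submodule ℝ V // Module.rank ℝ E ≤ (n : Cardinal)},
    ⨆ u ∈ K, Metric.infDist u (E.1 : Set V)

/-- The greedy error `σ_n(K) = sup_{x ∈ K} ‖x - P_{V_n} x‖` where
`V_n = span{u^0, …, u^{n-1}}`. -/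
noncomputable def greedyErr {V : Type*} [NormedAddCommGroup V] [InnerProductSpace ℝ V]
    (u : ℕ → V) (K : Set V) (n : ℕ) : ℝ :=
  ⨆ x ∈ K, Metric.infDist x (Submodule.span ℝ (u '' Set.Iio n) : Set V)

/-- `u` is a weak greedy sequence for `K` with parameter `γ`:
`‖u^n - P_{V_n} u^n‖ ≥ γ · σ_n(K)` for all `n`. -/
def IsWeakGreedy {V : Type*} [NormedAddCommGroup V] [InnerProductSpace ℝ V]
    (u : ℕ → V) (K : Set V) (γ : ℝ) : Prop :=
  ∀ n : ℕ, γ * greedyErr u K n ≤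
    Metric.infDist (u n) (Submodule.span ℝ (u '' Set.Iio n) : Set V)

/-!
Let `V_p` be the `p`-th greedy space. The product of the norms of the Gram–Schmidt vectors of
`u^p, …, u^{p+2j-1}` is a determinant in the orthonormal basis that these vectors give after
normalisation, and each factor is at least `γ σ_{p+2j}`. The determinant is bounded by Hadamard's
inequality in another orthonormal basis, adapted to a nearly optimal `j`-dimensional subspace: the
projected `u^i` have norm at most about `σ_p`, and components orthogonal to that subspace of norm
at most about `d_j`. This gives `(γ σ_{p+2j})^2 ≤ 2 σ_p d_j`. With `p = 2j = 2^{k+1}` the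
rate of `d_j` propagates to `σ_{2^k}` by induction, and monotonicity fills in between the powers
of two.
-/

open Module Metric Set InnerProductSpace
open scoped RealInnerProductSpace

section Hadamard
variable {F : Type*} [NormedAddCommGroup F] [InnerProductSpace ℝ F] {N : ℕ}

theorem abs_det_orthonormalBasis_eq (b b' : OrthonormalBasis (Fin N) ℝ F) (v : Fin N → F) :
    |b.toBasis.det v| = |b'.toBasis.det v| := by
  have : Fact (finrank ℝ F = N) := ⟨by simpa using finrank_eq_card_basis b.toBasis⟩
  rw [← b.toBasis.orientation.volumeForm_robust' b, ← b.toBasis.orientation.volumeForm_robust' b']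

theorem abs_det_le_prod_norm (b : OrthonormalBasis (Fin N) ℝ F) (v : Fin N → F) :
    |b.toBasis.det v| ≤ ∏ i, ‖v i‖ := by
  have : Fact (finrank ℝ F = N) := ⟨by simpa using finrank_eq_card_basis b.toBasis⟩
  rw [← b.toBasis.orientation.volumeForm_robust' b]
  exact b.toBasis.orientation.abs_volumeForm_apply_le v

theorem abs_matrix_det_le_prod_sqrt (M : Matrix (Fin N) (Fin N) ℝ) :
    |M.det| ≤ ∏ i, √(∑ k, M k i ^ 2) := by
  let b := EuclideanSpace.basisFun (Fin N) ℝ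
  have h := abs_det_le_prod_norm b fun i => WithLp.toLp 2 (M.col i)
  have hM : b.toBasis.toMatrix (fun i => WithLp.toLp 2 (M.col i)) = M := by
    ext k i
    simp [b, Basis.toMatrix_apply]
  rw [Basis.det_apply, hM] at h
  simpa [EuclideanSpace.norm_eq] using h

theorem exists_orthonormalBasis_mem_orthogonal {𝕜 E : Type*} [RCLike 𝕜] [NormedAddCommGroup E]
    [InnerProductSpace 𝕜 E] [FiniteDimensional 𝕜 E] (hE : finrank 𝕜 E = N) (W : Submodule 𝕜 E) :
    ∃ b : OrthonormalBasis (Fin N) 𝕜 E, ∀ k : Fin N, finrank 𝕜 W ≤ k → b k ∈ Wᗮ := by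
  have hN : finrank 𝕜 W + finrank 𝕜 Wᗮ = N := by rw [W.finrank_add_finrank_orthogonal, hE]
  subst hN
  refine ⟨(((stdOrthonormalBasis 𝕜 W).prod (stdOrthonormalBasis 𝕜 Wᗮ)).map
    W.orthogonalDecomposition.symm).reindex finSumFinEquiv, fun k hk => ?_⟩
  obtain ⟨i, rfl⟩ : ∃ i, Fin.natAdd _ i = k :=
    ⟨Fin.subNat _ (Fin.cast (add_comm _ _) k) hk, by simp⟩
  simp

theorem abs_prod_mul_abs_det_le (b : OrthonormalBasis (Fin N) ℝ F) (v : Fin N → F)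
    (c : Fin N → ℝ) :
    |∏ k, c k| * |b.toBasis.det v| ≤ ∏ i, √(∑ k, (c k * ⟪b k, v i⟫) ^ 2) := by
  have hdet : (∏ k, c k) * b.toBasis.det v = (Matrix.of fun k i => c k * ⟪b k, v i⟫).det := by
    rw [Basis.det_apply, ← Matrix.det_mul_column]
    congr! 4
    simp [Basis.toMatrix_apply, b.repr_apply_apply]
  rw [← abs_mul, hdet]
  exact abs_matrix_det_le_prod_sqrt _

theorem sum_sq_inv_mul_inner_le_one {ι : Type*} [Fintype ι] {e : ι → F} (he : Orthonormal ℝ e)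
    {x : F} {r : ℝ} (hx : ‖x‖ ≤ r) : ∑ k, (r⁻¹ * ⟪e k, x⟫) ^ 2 ≤ 1 := by
  have hbessel : ∑ k, ⟪e k, x⟫ ^ 2 ≤ ‖x‖ ^ 2 := by simpa using he.sum_inner_products_le x
  calc ∑ k, (r⁻¹ * ⟪e k, x⟫) ^ 2 = r⁻¹ ^ 2 * ∑ k, ⟪e k, x⟫ ^ 2 := by
        simp only [mul_pow, Finset.mul_sum]
    _ ≤ r⁻¹ ^ 2 * ‖x‖ ^ 2 := by gcongr
    _ = (‖x‖ / r) ^ 2 := by ring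
    _ ≤ 1 := pow_le_one₀ (div_nonneg (norm_nonneg x) ((norm_nonneg x).trans hx))
        (div_le_one_of_le₀ hx ((norm_nonneg x).trans hx))

theorem abs_det_le_of_close_to_submodule {j l : ℕ} (b : OrthonormalBasis (Fin (j + l)) ℝ F)
    {W : Submodule ℝ F} (hW : finrank ℝ W ≤ j) {v : Fin (j + l) → F} {a d : ℝ} (ha : 0 < a)
    (hd : 0 < d) (hva : ∀ i, ‖v i‖ ≤ a) (hvd : ∀ i, ∃ w ∈ W, ‖v i - w‖ ≤ d) :
    |b.toBasis.det v| ≤ √2 ^ (j + l) * (a ^ j * d ^ l) := by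
  have := b.toBasis.finiteDimensional_of_finite
  obtain ⟨b', hb'⟩ := exists_orthonormalBasis_mem_orthogonal
    (by simpa using finrank_eq_card_basis b.toBasis) W
  -- The first `j` coordinates are bounded by `a`, the others by `d`: rescaling them accordingly
  -- before applying Hadamard's inequality produces `a ^ j * d ^ l` instead of `a ^ (j + l)`.
  let c : Fin (j + l) → ℝ := Fin.append (fun _ => a⁻¹) (fun _ => d⁻¹)
  have hc : |∏ k, c k| = (a ^ j * d ^ l)⁻¹ := by
    rw [Fin.prod_univ_add]
    simp [c, abs_of_pos ha, abs_of_pos hd, mul_comm]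
  have hcol (i : Fin (j + l)) : ∑ k, (c k * ⟪b' k, v i⟫) ^ 2 ≤ 2 := by
    obtain ⟨w, hw, hwd⟩ := hvd i
    have hinner (k : Fin l) : ⟪b' (k.natAdd j), v i⟫ = ⟪b' (k.natAdd j), v i - w⟫ := by
      rw [inner_sub_right, Submodule.inner_left_of_mem_orthogonal hw (hb' _ (by simp; omega)),
        sub_zero]
    rw [Fin.sum_univ_add]
    simp only [c, Fin.append_left, Fin.append_right, hinner]
    refine (add_le_add
      (sum_sq_inv_mul_inner_le_one (b'.orthonormal.comp _ (Fin.castAdd_injective j l)) (hva i))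
      (sum_sq_inv_mul_inner_le_one (b'.orthonormal.comp _ (Fin.natAdd_injective l j)) hwd)).trans_eq
      one_add_one_eq_two
  rw [abs_det_orthonormalBasis_eq b b', ← inv_mul_le_iff₀' (by positivity), ← hc]
  calc |∏ k, c k| * |b'.toBasis.det v| ≤ ∏ i, √(∑ k, (c k * ⟪b' k, v i⟫) ^ 2) :=
        abs_prod_mul_abs_det_le b' v c
    _ ≤ ∏ _i : Fin (j + l), √2 := by gcongr with i; exact hcol i
    _ = √2 ^ (j + l) := by simp

theorem abs_det_inner_le {j l : ℕ} {e x : Fin (j + l) → F} (he : Orthonormal ℝ e)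
    {S W : Submodule ℝ F} (heS : ∀ k, e k ∈ Sᗮ) [FiniteDimensional ℝ W] (hW : finrank ℝ W ≤ j)
    {a d : ℝ} (ha : 0 < a) (hd : 0 < d) (hxS : ∀ i, infDist (x i) S < a)
    (hxW : ∀ i, infDist (x i) W < d) :
    |(Matrix.of fun k i => ⟪e k, x i⟫).det| ≤ √2 ^ (j + l) * (a ^ j * d ^ l) := by
  let E := Submodule.span ℝ (range e)
  let b : OrthonormalBasis (Fin (j + l)) ℝ E :=
    (Basis.span he.linearIndependent).toOrthonormalBasis <| by
      simpa [orthonormal_iff_ite, Basis.span_apply] using he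
  have hb (k) : (b k : F) = e k := by simp [b, Basis.span_apply]
  have : FiniteDimensional ℝ E := b.toBasis.finiteDimensional_of_finite
  let P := E.orthogonalProjectionOnto
  have hP : (Matrix.of fun k i => ⟪e k, x i⟫).det = b.toBasis.det fun i => P (x i) := by
    rw [Basis.det_apply]
    congr 1
    ext k i
    simp [Basis.toMatrix_apply, b.repr_apply_apply, P, hb]
  have hSE : S ≤ Eᗮ :=
    (Submodule.isOrtho_iff_le.2 (Submodule.span_le.2 (range_subset_iff.2 heS))).symm.le
  rw [hP]
  refine abs_det_le_of_close_to_submodule b ((W.finrank_map_le P.toLinearMap).trans hW) ha hd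
    (fun i => ?_) (fun i => ?_)
  · obtain ⟨y, hy, hxy⟩ := (infDist_lt_iff S.nonempty).1 (hxS i)
    have hPy : P y = 0 := Submodule.orthogonalProjectionOnto_apply_of_mem_orthogonal (hSE hy)
    calc ‖P (x i)‖ = ‖P (x i - y)‖ := by rw [map_sub, hPy, sub_zero]
      _ ≤ ‖x i - y‖ := E.norm_orthogonalProjectionOnto_apply_le _
      _ ≤ a := by rw [← dist_eq_norm]; exact hxy.le
  · obtain ⟨w, hw, hxw⟩ := (infDist_lt_iff W.nonempty).1 (hxW i)
    refine ⟨P w, Submodule.mem_map_of_mem hw, ?_⟩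
    rw [← map_sub]
    exact (E.norm_orthogonalProjectionOnto_apply_le _).trans (dist_eq_norm (x i) w ▸ hxw.le)

end Hadamard

section GramSchmidt
variable {𝕜 V ι κ : Type*} [RCLike 𝕜] [NormedAddCommGroup V] [InnerProductSpace 𝕜 V]
  [LinearOrder ι] [LocallyFiniteOrderBot ι] [WellFoundedLT ι]

theorem sub_gramSchmidt_mem_span_image_Iio (u : ι → V) (k : ι) :
    u k - gramSchmidt 𝕜 u k ∈ Submodule.span 𝕜 (u '' Iio k) := by
  rw [sub_eq_iff_eq_add'.2 (gramSchmidt_def' 𝕜 u k), ← span_gramSchmidt_Iio 𝕜 u k]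
  refine Submodule.sum_mem _ fun i hi => Submodule.span_mono ?_ <|
    Submodule.starProjection_apply_mem (𝕜 ∙ gramSchmidt 𝕜 u i) (u k)
  exact singleton_subset_iff.2 (mem_image_of_mem _ (Finset.mem_Iio.1 hi))

theorem infDist_span_image_Iio_le_norm_gramSchmidt (u : ι → V) (k : ι) :
    infDist (u k) (Submodule.span 𝕜 (u '' Iio k) : Set V) ≤ ‖gramSchmidt 𝕜 u k‖ := by
  simpa [dist_eq_norm] using infDist_le_dist_of_mem (x := u k)
    (sub_gramSchmidt_mem_span_image_Iio (𝕜 := 𝕜) u k)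

theorem orthonormal_gramSchmidtNormed_comp {u : ι → V} {f : κ → ι} (hf : Function.Injective f)
    (hu : ∀ k, gramSchmidt 𝕜 u (f k) ≠ 0) :
    Orthonormal 𝕜 fun k => gramSchmidtNormed 𝕜 u (f k) :=
  (gramSchmidtNormed_orthonormal' u).comp (fun k => ⟨f k, by simpa [gramSchmidtNormed] using hu k⟩)
    fun _ _ h => hf (congrArg Subtype.val h)

theorem inner_gramSchmidtNormed_eq_zero (u : ι → V) {i k : ι} (h : i < k) :
    inner 𝕜 (gramSchmidtNormed 𝕜 u k) (u i) = 0 := by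
  rw [gramSchmidtNormed, inner_smul_left, gramSchmidt_inv_triangular 𝕜 u h, mul_zero]

theorem gramSchmidtNormed_mem_orthogonal_span_image_Iio (u : ι → V) {i k : ι} (h : i ≤ k) :
    gramSchmidtNormed 𝕜 u k ∈ (Submodule.span 𝕜 (u '' Iio i))ᗮ := by
  suffices h_ortho : (𝕜 ∙ gramSchmidtNormed 𝕜 u k) ⟂ Submodule.span 𝕜 (u '' Iio i) from
    h_ortho.le (Submodule.mem_span_singleton_self _)
  rw [Submodule.isOrtho_span]
  rintro _ rfl _ ⟨n, hn, rfl⟩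
  exact inner_gramSchmidtNormed_eq_zero u (lt_of_lt_of_le hn h)

theorem inner_gramSchmidtNormed_self (u : ι → V) (k : ι) :
    inner 𝕜 (gramSchmidtNormed 𝕜 u k) (u k) = (‖gramSchmidt 𝕜 u k‖ : 𝕜) := by
  have hrem : inner 𝕜 (gramSchmidtNormed 𝕜 u k) (u k - gramSchmidt 𝕜 u k) = 0 :=
    Submodule.inner_left_of_mem_orthogonal (sub_gramSchmidt_mem_span_image_Iio u k)
      (gramSchmidtNormed_mem_orthogonal_span_image_Iio u le_rfl)
  rw [sub_eq_zero.1 ((inner_sub_right ..).symm.trans hrem), gramSchmidtNormed, inner_smul_left,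
    inner_self_eq_norm_sq_to_K]
  rcases eq_or_ne ‖gramSchmidt 𝕜 u k‖ 0 with h | h
  · simp [h]
  · have : (‖gramSchmidt 𝕜 u k‖ : 𝕜) ≠ 0 := by exact_mod_cast h
    rw [map_inv₀, RCLike.conj_ofReal, sq, inv_mul_cancel_left₀ this]

theorem det_inner_gramSchmidtNormed [LinearOrder κ] [Fintype κ] (u : ι → V) {f : κ → ι}
    (hf : StrictMono f) :
    (Matrix.of fun k i => inner 𝕜 (gramSchmidtNormed 𝕜 u (f k)) (u (f i))).det =
      ∏ i, (‖gramSchmidt 𝕜 u (f i)‖ : 𝕜) := by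
  rw [Matrix.det_of_isUpperTriangular]
  · simp only [Matrix.of_apply, inner_gramSchmidtNormed_self]
  · exact fun k i hik => inner_gramSchmidtNormed_eq_zero u (hf hik)

end GramSchmidt

section Deviation
variable {R V : Type*} [Semiring R] [SeminormedAddCommGroup V] [Module R V] {K : Set V}

/-- The deviation of `K` from the subspace `E`: the worst-case distance to `E` of a point of `K`.
`kolWidth` is the infimum of this quantity over `E`, and `greedyErr` its value at a greedy space.
Where these distances are unbounded, the supremum takes the junk value `0`. -/
noncomputable def deviation (K : Set V) (E : Submodule R V) : ℝ :=
  ⨆ x ∈ K, infDist x (E : Set V)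

theorem deviation_nonneg (K : Set V) (E : Submodule R V) : 0 ≤ deviation K E :=
  Real.iSup_nonneg fun _ => Real.iSup_nonneg fun _ => infDist_nonneg

theorem infDist_le_deviation (hK : Bornology.IsBounded K) (E : Submodule R V) {x : V}
    (hx : x ∈ K) : infDist x (E : Set V) ≤ deviation K E := by
  obtain ⟨C, hC⟩ := hK.exists_norm_le
  have hbound (y : V) : ⨆ _ : y ∈ K, infDist y (E : Set V) ≤ max C 0 := by
    refine Real.iSup_le (fun hy => ?_) (le_max_right C 0)
    calc infDist y (E : Set V) ≤ dist y 0 := infDist_le_dist_of_mem E.zero_mem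
      _ = ‖y‖ := dist_zero_right y
      _ ≤ max C 0 := (hC y hy).trans (le_max_left C 0)
  calc infDist x (E : Set V) = ⨆ _ : x ∈ K, infDist x (E : Set V) := by simp [hx]
    _ ≤ deviation K E := le_ciSup ⟨max C 0, forall_mem_range.2 hbound⟩ x

theorem deviation_anti (hK : Bornology.IsBounded K) {E F : Submodule R V} (h : E ≤ F) :
    deviation K F ≤ deviation K E := by
  have h0 := deviation_nonneg K E
  refine Real.iSup_le (fun x => Real.iSup_le (fun hx => ?_) h0) h0
  exact (infDist_le_infDist_of_subset h E.nonempty).trans (infDist_le_deviation hK E hx)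

end Deviation

section Greedy
variable {V : Type*} [NormedAddCommGroup V] [InnerProductSpace ℝ V] {K : Set V} {u : ℕ → V}

theorem kolWidth_nonneg (K : Set V) (n : ℕ) : 0 ≤ kolWidth K n :=
  Real.iInf_nonneg fun E => deviation_nonneg K E.1

theorem exists_deviation_lt_of_kolWidth_lt {n : ℕ} {d : ℝ} (hd : kolWidth K n < d) :
    ∃ E : Submodule ℝ V, FiniteDimensional ℝ E ∧ finrank ℝ E ≤ n ∧ deviation K E < d := by
  have : Nonempty {E : Submodule ℝ V // Module.rank ℝ E ≤ (n : Cardinal)} := ⟨⟨⊥, by simp⟩⟩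
  obtain ⟨⟨E, hE⟩, hEd⟩ := exists_lt_of_ciInf_lt hd
  exact ⟨E, rank_lt_aleph0_iff.1 (hE.trans_lt Cardinal.natCast_lt_aleph0),
    finrank_le_of_rank_le hE, hEd⟩

theorem greedyErr_nonneg (u : ℕ → V) (K : Set V) (n : ℕ) : 0 ≤ greedyErr u K n :=
  deviation_nonneg K _

theorem greedyErr_antitone (hK : Bornology.IsBounded K) (u : ℕ → V) : Antitone (greedyErr u K) :=
  fun _ _ h => deviation_anti hK (Submodule.span_mono (image_mono (Iio_subset_Iio h)))

theorem greedyErr_zero (u : ℕ → V) (K : Set V) : greedyErr u K 0 = kolWidth K 0 := by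
  let _ : Unique {E : Submodule ℝ V // Module.rank ℝ E ≤ ((0 : ℕ) : Cardinal)} :=
    { default := ⟨⊥, by simp⟩
      uniq := fun E => Subtype.ext (by simpa using E.2) }
  have hspan : Submodule.span ℝ (u '' Iio 0) = ⊥ := by simp
  rw [greedyErr, kolWidth, ciInf_unique, hspan]
  rfl

namespace IsWeakGreedy
variable {γ : ℝ}

theorem mul_greedyErr_le (hwg : IsWeakGreedy u K γ) (hK : Bornology.IsBounded K)
    (hu : ∀ n, u n ∈ K) (n : ℕ) : γ * greedyErr u K n ≤ greedyErr u K n :=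
  (hwg n).trans (infDist_le_deviation hK _ (hu n))

theorem mul_greedyErr_le_norm_gramSchmidt (hwg : IsWeakGreedy u K γ) (hK : Bornology.IsBounded K)
    (hγ : 0 ≤ γ) {k n : ℕ} (h : k ≤ n) : γ * greedyErr u K n ≤ ‖gramSchmidt ℝ u k‖ :=
  calc γ * greedyErr u K n ≤ γ * greedyErr u K k := by gcongr; exact greedyErr_antitone hK u h
    _ ≤ infDist (u k) (Submodule.span ℝ (u '' Iio k) : Set V) := hwg k
    _ ≤ ‖gramSchmidt ℝ u k‖ := infDist_span_image_Iio_le_norm_gramSchmidt u k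

theorem pow_mul_greedyErr_le (hwg : IsWeakGreedy u K γ) (hK : Bornology.IsBounded K)
    (hu : ∀ n, u n ∈ K) (hγ : 0 < γ) {p j l : ℕ} (hσ : 0 < greedyErr u K (p + (j + l))) {a d : ℝ}
    (ha : greedyErr u K p < a) (hd : kolWidth K j < d) :
    (γ * greedyErr u K (p + (j + l))) ^ (j + l) ≤ √2 ^ (j + l) * (a ^ j * d ^ l) := by
  obtain ⟨E, _, hEj, hEd⟩ := exists_deviation_lt_of_kolWidth_lt hd
  have hgs (i : Fin (j + l)) :
      γ * greedyErr u K (p + (j + l)) ≤ ‖gramSchmidt ℝ u (p + i)‖ :=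
    hwg.mul_greedyErr_le_norm_gramSchmidt hK hγ.le (by omega)
  have hmono : StrictMono fun i : Fin (j + l) => p + (i : ℕ) := fun _ _ h => by simpa using h
  calc (γ * greedyErr u K (p + (j + l))) ^ (j + l)
      = ∏ _i : Fin (j + l), γ * greedyErr u K (p + (j + l)) := by simp
    _ ≤ ∏ i : Fin (j + l), ‖gramSchmidt ℝ u (p + i)‖ :=
        Finset.prod_le_prod (fun _ _ => by positivity) fun i _ => hgs i
    _ = (Matrix.of fun k i : Fin (j + l) =>
          ⟪gramSchmidtNormed ℝ u (p + k), u (p + i)⟫).det :=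
        (det_inner_gramSchmidtNormed (𝕜 := ℝ) u hmono).symm
    _ ≤ √2 ^ (j + l) * (a ^ j * d ^ l) := (le_abs_self _).trans <| abs_det_inner_le
        (orthonormal_gramSchmidtNormed_comp hmono.injective fun i =>
          norm_pos_iff.1 ((mul_pos hγ hσ).trans_le (hgs i)))
        (fun i => gramSchmidtNormed_mem_orthogonal_span_image_Iio u (Nat.le_add_right p i)) hEj
        ((greedyErr_nonneg u K p).trans_lt ha) ((kolWidth_nonneg K j).trans_lt hd)
        (fun i => (infDist_le_deviation hK _ (hu _)).trans_lt ha)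
        (fun i => (infDist_le_deviation hK E (hu _)).trans_lt hEd)

theorem sq_mul_greedyErr_le (hwg : IsWeakGreedy u K γ) (hK : Bornology.IsBounded K)
    (hu : ∀ n, u n ∈ K) (hγ : 0 < γ) (p : ℕ) {j : ℕ} (hj : j ≠ 0) :
    (γ * greedyErr u K (p + (j + j))) ^ 2 ≤ 2 * (greedyErr u K p * kolWidth K j) := by
  rcases (greedyErr_nonneg u K (p + (j + j))).eq_or_lt' with hσ | hσ
  · have := mul_nonneg (greedyErr_nonneg u K p) (kolWidth_nonneg K j)
    simpa [hσ] using this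
  rw [← div_le_iff₀' two_pos]
  refine le_mul_of_forall_lt₀ fun a ha d hd => ?_
  rw [div_le_iff₀' two_pos]
  have ha0 : 0 < a := (greedyErr_nonneg u K p).trans_lt ha
  have hd0 : 0 < d := (kolWidth_nonneg K j).trans_lt hd
  refine le_of_pow_le_pow_left₀ hj (by positivity) ?_
  calc ((γ * greedyErr u K (p + (j + j))) ^ 2) ^ j
      = (γ * greedyErr u K (p + (j + j))) ^ (j + j) := by
        rw [← pow_mul, two_mul]
    _ ≤ √2 ^ (j + j) * (a ^ j * d ^ j) := hwg.pow_mul_greedyErr_le hK hu hγ hσ ha hd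
    _ = (2 * (a * d)) ^ j := by
        rw [pow_add, ← mul_pow, Real.mul_self_sqrt zero_le_two, mul_pow, mul_pow]

theorem sq_mul_greedyErr_le_kolWidth_zero (hwg : IsWeakGreedy u K γ)
    (hK : Bornology.IsBounded K) (hu : ∀ n, u n ∈ K) (hγ : 0 ≤ γ) (n : ℕ) :
    γ ^ 2 * greedyErr u K n ≤ kolWidth K 0 :=
  calc γ ^ 2 * greedyErr u K n = γ * (γ * greedyErr u K n) := by ring
    _ ≤ γ * greedyErr u K n := by gcongr; exact hwg.mul_greedyErr_le hK hu n
    _ ≤ greedyErr u K n := hwg.mul_greedyErr_le hK hu n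
    _ ≤ greedyErr u K 0 := greedyErr_antitone hK u n.zero_le
    _ = kolWidth K 0 := greedyErr_zero u K

theorem sq_mul_greedyErr_two_pow_add_two_le (hwg : IsWeakGreedy u K γ)
    (hK : Bornology.IsBounded K) (hu : ∀ n, u n ∈ K) (hγ : 0 < γ) {s C0 : ℝ}
    (hd : ∀ n : ℕ, kolWidth K n ≤ C0 * (max 1 (n : ℝ)) ^ (-s)) (k : ℕ) :
    (γ * greedyErr u K (2 ^ (k + 2))) ^ 2 ≤
      2 * (greedyErr u K (2 ^ (k + 1)) * (C0 * (((2 : ℝ) ^ k) ^ s)⁻¹)) := by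
  have hwidth : kolWidth K (2 ^ k) ≤ C0 * (((2 : ℝ) ^ k) ^ s)⁻¹ := by
    simpa [one_le_pow₀, Real.rpow_neg] using hd (2 ^ k)
  have hstep := hwg.sq_mul_greedyErr_le hK hu hγ (2 ^ (k + 1)) (pow_ne_zero k two_ne_zero)
  rw [show 2 ^ (k + 1) + (2 ^ k + 2 ^ k) = 2 ^ (k + 2) by ring] at hstep
  refine hstep.trans ?_
  gcongr
  exact greedyErr_nonneg u K _

theorem sq_mul_greedyErr_two_pow_mul_rpow_le (hwg : IsWeakGreedy u K γ)
    (hK : Bornology.IsBounded K) (hu : ∀ n, u n ∈ K) (hγ : 0 < γ) {s C0 : ℝ} (hs : 0 ≤ s)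
    (hd : ∀ n : ℕ, kolWidth K n ≤ C0 * (max 1 (n : ℝ)) ^ (-s)) (k : ℕ) :
    γ ^ 2 * greedyErr u K (2 ^ k) * ((2 : ℝ) ^ k) ^ s ≤ 2 * ((2 : ℝ) ^ s) ^ 3 * C0 := by
  have hzero : kolWidth K 0 ≤ C0 := by simpa using hd 0
  have hC0 : 0 ≤ C0 := (kolWidth_nonneg K 0).trans hzero
  have hinit (n : ℕ) : γ ^ 2 * greedyErr u K n ≤ C0 :=
    (hwg.sq_mul_greedyErr_le_kolWidth_zero hK hu hγ.le n).trans hzero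
  have hsucc (k : ℕ) : ((2 : ℝ) ^ (k + 1)) ^ s = (2 ^ k) ^ s * 2 ^ s := by
    rw [pow_succ, Real.mul_rpow (by positivity) zero_le_two]
  have ht : 1 ≤ (2 : ℝ) ^ s := Real.one_le_rpow one_le_two hs
  set t := (2 : ℝ) ^ s
  have hC0t : C0 * t ≤ 2 * t ^ 3 * C0 :=
    calc C0 * t ≤ C0 * t ^ 3 := by gcongr; exact le_self_pow₀ ht three_ne_zero
      _ ≤ 2 * (C0 * t ^ 3) := le_mul_of_one_le_left (by positivity) one_le_two
      _ = 2 * t ^ 3 * C0 := by ring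
  induction k using Nat.twoStepInduction with
  | zero => simpa using (hinit 1).trans ((le_mul_of_one_le_right hC0 ht).trans hC0t)
  | one =>
    rw [pow_one, pow_one]
    exact (mul_le_mul_of_nonneg_right (hinit 2) (by positivity)).trans hC0t
  | more k _ ih =>
    have hσ₁ := greedyErr_nonneg u K (2 ^ (k + 1))
    have hσ₂ := greedyErr_nonneg u K (2 ^ (k + 2))
    have hstep := hwg.sq_mul_greedyErr_two_pow_add_two_le hK hu hγ hd k
    rw [hsucc] at ih ⊢
    rw [hsucc]
    have hy : 0 < ((2 : ℝ) ^ k) ^ s := by positivity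
    set y := ((2 : ℝ) ^ k) ^ s
    set σ₁ := greedyErr u K (2 ^ (k + 1))
    set σ₂ := greedyErr u K (2 ^ (k + 2))
    refine (sq_le_sq₀ (by positivity) (by positivity)).1 ?_
    calc (γ ^ 2 * σ₂ * (y * t * t)) ^ 2 = (γ * σ₂) ^ 2 * (γ ^ 2 * y ^ 2 * t ^ 4) := by ring
      _ ≤ 2 * (σ₁ * (C0 * y⁻¹)) * (γ ^ 2 * y ^ 2 * t ^ 4) := by gcongr
      _ = γ ^ 2 * σ₁ * (y * t) * (2 * t ^ 3 * C0) := by field_simp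
      _ ≤ 2 * t ^ 3 * C0 * (2 * t ^ 3 * C0) := by gcongr
      _ = (2 * t ^ 3 * C0) ^ 2 := (sq _).symm

theorem greedyErr_le_rpow (hwg : IsWeakGreedy u K γ) (hK : Bornology.IsBounded K)
    (hu : ∀ n, u n ∈ K) (hγ : 0 < γ) {s C0 : ℝ} (hs : 0 ≤ s)
    (hd : ∀ n : ℕ, kolWidth K n ≤ C0 * (max 1 (n : ℝ)) ^ (-s)) {n : ℕ} (hn : n ≠ 0) :
    greedyErr u K n ≤ 2 ^ (1 + 4 * s) * C0 / γ ^ 2 * (n : ℝ) ^ (-s) := by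
  have hn0 : (0 : ℝ) < n := by exact_mod_cast hn.bot_lt
  set k := Nat.log 2 n
  have hlog : (n : ℝ) ≤ 2 ^ k * 2 := by
    exact_mod_cast (Nat.lt_pow_succ_log_self one_lt_two n).le
  have hσ : 0 ≤ greedyErr u K (2 ^ k) := greedyErr_nonneg u K _
  have hconst : (2 : ℝ) ^ (1 + 4 * s) = 2 * (2 ^ s) ^ 4 := by
    rw [Real.rpow_add two_pos, Real.rpow_one, mul_comm 4, Real.rpow_mul zero_le_two]
    norm_cast
  rw [Real.rpow_neg hn0.le, ← div_eq_mul_inv, div_div, le_div_iff₀ (by positivity), hconst]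
  calc greedyErr u K n * (γ ^ 2 * n ^ s)
      ≤ greedyErr u K (2 ^ k) * (γ ^ 2 * (2 ^ k * 2) ^ s) := by
        gcongr
        exact greedyErr_antitone hK u (Nat.pow_log_le_self 2 hn)
    _ = γ ^ 2 * greedyErr u K (2 ^ k) * (2 ^ k) ^ s * 2 ^ s := by
        rw [Real.mul_rpow (by positivity) zero_le_two]
        ring
    _ ≤ 2 * ((2 : ℝ) ^ s) ^ 3 * C0 * 2 ^ s := mul_le_mul_of_nonneg_right
        (hwg.sq_mul_greedyErr_two_pow_mul_rpow_le hK hu hγ hs hd k) (by positivity)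
    _ = 2 * (2 ^ s) ^ 4 * C0 := by ring

end IsWeakGreedy

end Greedy

theorem statement14_general {V : Type*} [NormedAddCommGroup V] [InnerProductSpace ℝ V]
    (K : Set V) (hK : Bornology.IsBounded K) (s C0 : ℝ) (hs : 0 < s) (hC0 : 0 < C0)
    (hd : ∀ n : ℕ, kolWidth K n ≤ C0 * (max 1 (n : ℝ)) ^ (-s))
    (m : ℝ) (hm : 0 < m)
    (u : ℕ → V) (hu : ∀ n, u n ∈ K) (hwg : IsWeakGreedy u K (1 / (8 * m)))
    (ε : ℝ) (hε : 0 < ε) (n : ℕ)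
    (hn : (2 : ℝ) ^ (4 + 10 / s) * C0 ^ (1 / s) * m ^ (3 / s) * ε ^ (-1 / s) ≤ n) :
    greedyErr u K n ≤ ε / (8 * m) := by
  have hn0 : 0 < (n : ℝ) := lt_of_lt_of_le (by positivity) hn
  have hthreshold : (2 ^ (4 * s + 10) * C0 * m ^ 3 / ε) ^ s⁻¹ =
      2 ^ (4 + 10 / s) * C0 ^ (1 / s) * m ^ (3 / s) * ε ^ (-1 / s) := by
    rw [Real.div_rpow (by positivity) hε.le, Real.mul_rpow (by positivity) (by positivity),
      Real.mul_rpow (by positivity) hC0.le, ← Real.rpow_mul zero_le_two,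
      ← Real.rpow_natCast_mul hm.le, neg_div, Real.rpow_neg hε.le]
    have hexp : (4 * s + 10) * s⁻¹ = 4 + 10 / s := by field_simp
    rw [hexp, one_div, Nat.cast_ofNat, div_eq_mul_inv, div_eq_mul_inv 3 s]
  have hpow : 2 ^ (4 * s + 10) * C0 * m ^ 3 / ε ≤ (n : ℝ) ^ s :=
    (Real.rpow_inv_le_iff_of_pos (by positivity) hn0.le hs).1 (hthreshold.trans_le hn)
  calc greedyErr u K n ≤ 2 ^ (1 + 4 * s) * C0 / (1 / (8 * m)) ^ 2 * (n : ℝ) ^ (-s) :=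
        hwg.greedyErr_le_rpow hK hu (by positivity) hs.le hd (by exact_mod_cast hn0.ne')
    _ = 2 ^ (4 * s + 10) * C0 * m ^ 3 / n ^ s / (8 * m) := by
        rw [Real.rpow_neg hn0.le, Real.rpow_add two_pos, Real.rpow_add two_pos, Real.rpow_one,
          show (2 : ℝ) ^ (10 : ℝ) = 1024 by norm_num]
        field
    _ ≤ ε / (8 * m) := by
        gcongr
        exact (div_le_comm₀ hε (by positivity)).1 hpow

theorem statement14 {V : Type*} [NormedAddCommGroup V] [InnerProductSpace ℝ V] [CompleteSpace V]
    (K : Set V) (hK : IsCompact K) (s C0 : ℝ) (hs : 0 < s) (hC0 : 0 < C0)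
    (hd : ∀ n : ℕ, kolWidth K n ≤ C0 * (max 1 (n : ℝ)) ^ (-s))
    (m : ℕ) (hm : 1 ≤ m)
    (u : ℕ → V) (hu : ∀ n, u n ∈ K) (hwg : IsWeakGreedy u K (1 / (8 * m)))
    (ε : ℝ) (hε : 0 < ε) (n : ℕ)
    (hn : (2 : ℝ) ^ (4 + 10 / s) * C0 ^ (1 / s) * (m : ℝ) ^ ((3 : ℝ) / s) * ε ^ (-1 / s) ≤ n) :
    greedyErr u K n ≤ ε / (8 * m) :=
  statement14_general K hK.isBounded s C0 hs hC0 hd m (by exact_mod_cast hm) u hu hwg ε hε n hn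
end
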